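/- Let r > 0 and let X be an ℝ^d-valued random vector with E|X|^{r'} < ∞ for some r' > r, whose law has a non-zero absolutely continuous component with respect to Lebesgue measure on ℝ^d. Let (Γ_N)_{N≥1} be a sequence of L^r-optimal quantizers of X, i.e. card(Γ_N) ≤ N and e_r(Γ_N, X) = e_{r,N}(X) for every N ≥ 1. Then for every s ∈ (0, (d+r)r'/(d+r')) there exists a finite constant K̃_{d,r,r',s}, depending only on d, r, r' and s, such that for every N ≥ 1: e_s(Γ_N, X) ≤ K̃_{d,r,r',s} · σ_{r'}(X) · N^{−1/d}. -/

import Mathlib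

open MeasureTheory Real

noncomputable section

abbrev Euc (d : ℕ) : Type := EuclideanSpace ℝ (Fin d)

/-- L^p quantization error of a random vector `X` w.r.t. a grid `Γ`. -/
def quantErrRV (p : ℝ) {Ω : Type*} [MeasurableSpace Ω] (P : Measure Ω) {d : ℕ}
    (X : Ω → Euc d) (Γ : Finset (Euc d)) : ℝ :=
  (∫ ω, (Metric.infDist (X ω) (Γ : Set (Euc d))) ^ p ∂P) ^ (1 / p)

/-- Optimal L^p quantization error at level `N`. -/
def optQuantErrRV (p : ℝ) (N : ℕ) {Ω : Type*} [MeasurableSpace Ω] (P : Measure Ω) {d : ℕ}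
    (X : Ω → Euc d) : ℝ :=
  sInf {e | ∃ Γ : Finset (Euc d), Γ.Nonempty ∧ Γ.card ≤ N ∧ e = quantErrRV p P X Γ}

/-- `σ_p(X)`, the L^p pseudo-standard deviation. -/
def sigmaRV (p : ℝ) {Ω : Type*} [MeasurableSpace Ω] (P : Measure Ω) {d : ℕ}
    (X : Ω → Euc d) : ℝ :=
  ⨅ a : Euc d, (∫ ω, ‖X ω - a‖ ^ p ∂P) ^ (1 / p)

open Metric
open scoped ENNReal

section Distortion

lemma add_rpow_le_two_rpow_mul {x y p : ℝ} (hx : 0 ≤ x) (hy : 0 ≤ y) (hp : 0 ≤ p) :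
    (x + y) ^ p ≤ 2 ^ p * (x ^ p + y ^ p) := by
  have hx' := rpow_nonneg hx p
  have hy' := rpow_nonneg hy p
  rcases le_total x y with h | h
  · calc (x + y) ^ p ≤ (2 * y) ^ p := rpow_le_rpow (by positivity) (by linarith) hp
      _ = 2 ^ p * y ^ p := mul_rpow (by norm_num) hy
      _ ≤ _ := by gcongr; linarith
  · calc (x + y) ^ p ≤ (2 * x) ^ p := rpow_le_rpow (by positivity) (by linarith) hp
      _ = 2 ^ p * x ^ p := mul_rpow (by norm_num) hx
      _ ≤ _ := by gcongr; linarith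

lemma rpow_le_one_add_rpow {x p q : ℝ} (hx : 0 ≤ x) (hp : 0 ≤ p) (hpq : p ≤ q) :
    x ^ p ≤ 1 + x ^ q := by
  have hx' := rpow_nonneg hx q
  rcases le_total x 1 with h | h
  · have := rpow_le_one hx h hp
    linarith
  · have := rpow_le_rpow_of_exponent_le h hpq
    linarith

variable {d : ℕ}

/-- The `p`-th power of the L^p quantization error of a distribution `μ`. -/
def distortion (μ : Measure (Euc d)) (p : ℝ) (Γ : Finset (Euc d)) : ℝ :=
  ∫ x, infDist x (Γ : Set (Euc d)) ^ p ∂μ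

lemma distortion_nonneg (μ : Measure (Euc d)) (p : ℝ) (Γ : Finset (Euc d)) :
    0 ≤ distortion μ p Γ :=
  integral_nonneg fun _ => rpow_nonneg infDist_nonneg _

lemma infDist_le_infDist_zero_add_norm (Γ : Finset (Euc d)) (x : Euc d) :
    infDist x (Γ : Set (Euc d)) ≤ infDist 0 (Γ : Set (Euc d)) + ‖x‖ := by
  have := infDist_le_infDist_add_dist (s := (Γ : Set (Euc d))) (x := x) (y := 0)
  rwa [dist_zero_right] at this

lemma continuous_infDist_rpow (Γ : Finset (Euc d)) {p : ℝ} (hp : 0 ≤ p) :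
    Continuous fun x : Euc d => infDist x (Γ : Set (Euc d)) ^ p :=
  (continuous_infDist_pt _).rpow_const fun _ => Or.inr hp

lemma integrable_one_add_norm_rpow {μ : Measure (Euc d)} [IsFiniteMeasure μ] {p : ℝ} (hp : 0 ≤ p)
    (hμ : Integrable (fun x => ‖x‖ ^ p) μ) {c : ℝ} (hc : 0 ≤ c) :
    Integrable (fun x => (c + ‖x‖) ^ p) μ := by
  refine (((integrable_const (c ^ p)).add hμ).const_mul (2 ^ p)).mono' ?_ ?_
  · exact ((continuous_const.add continuous_norm).rpow_const
      fun _ => Or.inr hp).aestronglyMeasurable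
  · refine .of_forall fun x => ?_
    rw [norm_of_nonneg (by positivity)]
    exact add_rpow_le_two_rpow_mul hc (norm_nonneg x) hp

lemma integrable_infDist_rpow {μ : Measure (Euc d)} [IsFiniteMeasure μ] {p q : ℝ} (hp : 0 ≤ p)
    (hpq : p ≤ q) (hμ : Integrable (fun x => ‖x‖ ^ q) μ) (Γ : Finset (Euc d)) :
    Integrable (fun x => infDist x (Γ : Set (Euc d)) ^ p) μ := by
  refine ((integrable_const (1 : ℝ)).add (integrable_one_add_norm_rpow (hp.trans hpq) hμ
    (infDist_nonneg (x := 0) (s := (Γ : Set (Euc d)))))).mono'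
    (continuous_infDist_rpow Γ hp).aestronglyMeasurable (.of_forall fun x => ?_)
  rw [norm_of_nonneg (rpow_nonneg infDist_nonneg _)]
  refine (rpow_le_one_add_rpow infDist_nonneg hp hpq).trans ?_
  exact add_le_add le_rfl (rpow_le_rpow infDist_nonneg
    (infDist_le_infDist_zero_add_norm Γ x) (hp.trans hpq))

/-- Adding a point `y` to a grid decreases the distortion at least by a multiple of
`dist(y, Γ) ^ r` times the mass of a ball around `y`. -/
lemma mul_measureReal_closedBall_le_distortion_sub {μ : Measure (Euc d)} [IsFiniteMeasure μ]
    {r r' : ℝ} (hr : 0 < r) (hr' : r ≤ r') (hμ : Integrable (fun x => ‖x‖ ^ r') μ)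
    {Γ : Finset (Euc d)} (hΓ : Γ.Nonempty) (y : Euc d) :
    ((3 / 4) ^ r - (1 / 4) ^ r) * infDist y (Γ : Set (Euc d)) ^ r *
      μ.real (closedBall y (infDist y (Γ : Set (Euc d)) / 4)) ≤
      distortion μ r Γ - distortion μ r (insert y Γ) := by
  set δ := infDist y (Γ : Set (Euc d)) with hδ
  have hδ0 : 0 ≤ δ := infDist_nonneg
  have h1 := integrable_infDist_rpow hr.le hr' hμ Γ
  have h2 := integrable_infDist_rpow hr.le hr' hμ (insert y Γ)
  rw [distortion, distortion, ← integral_sub h1 h2, mul_comm, ← smul_eq_mul,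
    ← integral_indicator_const _ measurableSet_closedBall]
  refine integral_mono ((integrable_const _).indicator measurableSet_closedBall) (h1.sub h2)
    fun x => ?_
  by_cases hx : x ∈ closedBall y (δ / 4)
  · rw [Set.indicator_of_mem hx]
    rw [mem_closedBall] at hx
    have h3 : 3 / 4 * δ ≤ infDist x (Γ : Set (Euc d)) := by
      have := infDist_le_infDist_add_dist (s := (Γ : Set (Euc d))) (x := y) (y := x)
      rw [dist_comm] at this
      linarith
    have h4 : infDist x ((insert y Γ : Finset (Euc d)) : Set (Euc d)) ≤ 1 / 4 * δ := by
      refine (infDist_le_dist_of_mem (y := y) (by simp)).trans (by linarith)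
    have h5 := rpow_le_rpow (by positivity) h3 hr.le
    have h6 := rpow_le_rpow infDist_nonneg h4 hr.le
    rw [mul_rpow (by norm_num) hδ0] at h5 h6
    simp only
    linarith
  · rw [Set.indicator_of_notMem hx]
    refine sub_nonneg.2 (rpow_le_rpow infDist_nonneg (infDist_le_infDist_of_subset ?_ ?_) hr.le)
    · simp
    · simpa using hΓ

/-- Integrated form of the local lower bound for the gain of adding a point. -/
lemma lintegral_infDist_rpow_mul_measure_closedBall_le {μ ν : Measure (Euc d)} [IsFiniteMeasure μ]
    [SFinite ν] {r c η : ℝ} (hr : 0 < r) (hc : 0 ≤ c) {Γ : Finset (Euc d)}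
    (h : ∀ y, c * infDist y (Γ : Set (Euc d)) ^ r *
      μ.real (closedBall y (infDist y (Γ : Set (Euc d)) / 4)) ≤ η) :
    ∫⁻ x, ENNReal.ofReal (c * (4 / 5 * infDist x (Γ : Set (Euc d))) ^ r) *
      ν (closedBall x (infDist x (Γ : Set (Euc d)) / 5)) ∂μ ≤ ENNReal.ofReal η * ν Set.univ := by
  set D : Euc d → ℝ := fun x => infDist x (Γ : Set (Euc d)) with hD
  have hDc : Continuous D := continuous_infDist_pt _
  have hD0 : ∀ x, 0 ≤ D x := fun x => infDist_nonneg
  let f : Euc d → Euc d → ℝ≥0∞ := fun x y =>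
    {p : Euc d × Euc d | dist p.1 p.2 ≤ D p.2 / 4}.indicator
      (fun p => ENNReal.ofReal (c * D p.2 ^ r)) (x, y)
  have hf : Measurable (Function.uncurry f) := by
    refine Measurable.indicator ?_ ?_
    · refine ENNReal.measurable_ofReal.comp (Continuous.measurable ?_)
      exact continuous_const.mul ((hDc.comp continuous_snd).rpow_const fun _ => Or.inr hr.le)
    · exact (isClosed_le continuous_dist ((hDc.comp continuous_snd).div_const 4)).measurableSet
  calc ∫⁻ x, ENNReal.ofReal (c * (4 / 5 * D x) ^ r) * ν (closedBall x (D x / 5)) ∂μ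
      ≤ ∫⁻ x, ∫⁻ y, f x y ∂ν ∂μ := by
        refine lintegral_mono fun x => ?_
        simp only
        rw [← lintegral_indicator_const measurableSet_closedBall]
        refine lintegral_mono fun y => ?_
        by_cases hy : y ∈ closedBall x (D x / 5)
        · rw [Set.indicator_of_mem hy]
          rw [mem_closedBall] at hy
          have h3 : 4 / 5 * D x ≤ D y := by
            have := infDist_le_infDist_add_dist (s := (Γ : Set (Euc d))) (x := x) (y := y)
            rw [dist_comm] at this
            simp only [hD] at hy ⊢
            linarith
          have hmem : (x, y) ∈ {p : Euc d × Euc d | dist p.1 p.2 ≤ D p.2 / 4} := by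
            simp only [Set.mem_ofPred_eq]
            rw [dist_comm]
            linarith
          simp only [f]
          rw [Set.indicator_of_mem hmem]
          have := hD0 x
          gcongr
        · rw [Set.indicator_of_notMem hy]
          exact zero_le
    _ = ∫⁻ y, ∫⁻ x, f x y ∂μ ∂ν := lintegral_lintegral_swap hf.aemeasurable
    _ ≤ ∫⁻ _, ENNReal.ofReal η ∂ν := by
        refine lintegral_mono fun y => ?_
        have : ∀ x, f x y = (closedBall y (D y / 4)).indicator
            (fun _ => ENNReal.ofReal (c * D y ^ r)) x := by
          intro x
          simp only [f, Set.indicator, mem_closedBall, Set.mem_ofPred_eq]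
        simp only [this]
        rw [lintegral_indicator_const measurableSet_closedBall, ← ofReal_measureReal,
          ← ENNReal.ofReal_mul (mul_nonneg hc (rpow_nonneg (hD0 y) r))]
        exact ENNReal.ofReal_le_ofReal (h y)
    _ = ENNReal.ofReal η * ν Set.univ := lintegral_const _

/-- Lower bound for the mass of balls under the density `(1 + ‖x‖) ^ (-q)`. -/
lemma ofReal_le_withDensity_closedBall {q M ρ : ℝ} (hq : 0 ≤ q) (hρ : 0 ≤ ρ)
    (x : Euc d) (hM : ρ ≤ M * (1 + ‖x‖)) :
    ENNReal.ofReal (((1 + M) * (1 + ‖x‖)) ^ (-q) * ρ ^ d * volume.real (ball (0 : Euc d) 1)) ≤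
      (volume.withDensity fun y : Euc d => ENNReal.ofReal ((1 + ‖y‖) ^ (-q))) (closedBall x ρ) := by
  have h0 : 0 < 1 + ‖x‖ := by positivity
  have hM' : 1 + ‖x‖ + ρ ≤ (1 + M) * (1 + ‖x‖) := by linarith
  have hpos : 0 < (1 + M) * (1 + ‖x‖) := by linarith
  rw [withDensity_apply _ measurableSet_closedBall, mul_assoc,
    ENNReal.ofReal_mul (rpow_nonneg hpos.le _), ENNReal.ofReal_mul (by positivity),
    ofReal_measureReal]
  have h1 : volume (closedBall x ρ) = ENNReal.ofReal (ρ ^ d) * volume (ball (0 : Euc d) 1) := by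
    have := Measure.addHaar_closedBall (volume : Measure (Euc d)) x hρ
    rwa [finrank_euclideanSpace_fin] at this
  rw [← h1, ← setLIntegral_const]
  refine setLIntegral_mono' measurableSet_closedBall fun y hy => ?_
  refine ENNReal.ofReal_le_ofReal (rpow_le_rpow_of_nonpos (by positivity) ?_ (by linarith))
  rw [mem_closedBall, dist_eq_norm] at hy
  have : ‖y‖ ≤ ‖x‖ + ‖y - x‖ := by simpa using norm_add_le x (y - x)
  linarith

/-- If no added point improves the L^r distortion of `Γ` by more than `η`, then the L^s distortion
of `Γ` is at most of order `η ^ (s / (d + r))`. -/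
lemma exists_distortion_le_mul_rpow (d : ℕ) {r r' s M : ℝ} (hr : 0 < r) (hr' : r < r')
    (hs : 0 < s) (hs' : s < (d + r) * r' / (d + r')) (hM : 1 ≤ M) :
    ∃ C : ℝ, 0 < C ∧ ∀ μ : Measure (Euc d), IsProbabilityMeasure μ →
      Integrable (fun x => ‖x‖ ^ r') μ → ∫ x, ‖x‖ ^ r' ∂μ ≤ 1 →
      ∀ Γ : Finset (Euc d), Γ.Nonempty → infDist 0 (Γ : Set (Euc d)) ≤ M →
      ∀ η : ℝ, 0 ≤ η → (∀ y, distortion μ r Γ - distortion μ r (insert y Γ) ≤ η) →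
        distortion μ s Γ ≤ C * η ^ (s / (d + r)) := by
  have hr'0 : 0 < r' := hr.trans hr'
  have hd0 : (0 : ℝ) ≤ d := d.cast_nonneg
  have hdr : 0 < d + r := by linarith
  have hdr' : 0 < d + r' := by linarith
  have hss : s * (d + r') < (d + r) * r' := (lt_div_iff₀ hdr').1 hs'
  have hsd : s < d + r := by
    have : s * (d + r') < (d + r) * (d + r') := by nlinarith
    exact lt_of_mul_lt_mul_right this hdr'.le
  have hsr' : s ≤ r' := by
    have : s * (d + r') ≤ r' * (d + r') := by nlinarith
    exact le_of_mul_le_mul_right this hdr'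
  set q : ℝ := r' * (d + r - s) / s with hq
  set θ : ℝ := s / (d + r) with hθ
  have hθ0 : 0 < θ := by positivity
  have hθ1 : θ < 1 := (div_lt_one hdr).2 hsd
  have hqd : (d : ℝ) < q := by
    rw [hq, lt_div_iff₀ hs]
    nlinarith
  set ν : Measure (Euc d) :=
    volume.withDensity fun y : Euc d => ENNReal.ofReal ((1 + ‖y‖) ^ (-q)) with hν
  have hνfin : ν Set.univ < ∞ := by
    rw [hν, withDensity_apply _ MeasurableSet.univ, Measure.restrict_univ]
    exact finite_integral_one_add_norm (by rwa [finrank_euclideanSpace_fin])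
  have : IsFiniteMeasure ν := ⟨hνfin⟩
  set v := volume.real (ball (0 : Euc d) 1) with hv
  have hv0 : 0 < v := ENNReal.toReal_pos (measure_ball_pos _ _ one_pos).ne' measure_ball_lt_top.ne
  set c : ℝ := (3 / 4) ^ r - (1 / 4) ^ r with hc
  have hc0 : 0 < c := sub_pos.2 (rpow_lt_rpow (by norm_num) (by norm_num) hr)
  set κ : ℝ := c * (4 / 5) ^ r * ((1 + M) ^ (-q) * (1 / 5) ^ d * v) with hκ
  have hκ0 : 0 < κ := by positivity
  refine ⟨((ν.real Set.univ + 1) / κ) ^ θ * (2 ^ r' * 2) ^ (1 - θ), by positivity, ?_⟩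
  intro μ _ hμ hμ1 Γ hΓ hΓM η hη hgain
  set D : Euc d → ℝ := fun x => infDist x (Γ : Set (Euc d)) with hD
  have hDc : Continuous D := continuous_infDist_pt _
  have hD0 : ∀ x, 0 ≤ D x := fun x => infDist_nonneg
  have hDM : ∀ x, D x ≤ M * (1 + ‖x‖) := fun x => by
    have := infDist_le_infDist_zero_add_norm Γ x
    have := norm_nonneg x
    simp only [hD]
    nlinarith
  have hnorm : ∀ x : Euc d, 0 < 1 + ‖x‖ := fun x => by positivity
  let F : Euc d → ℝ≥0∞ := fun x => ENNReal.ofReal ((1 + ‖x‖) ^ (-q) * D x ^ (d + r))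
  let G : Euc d → ℝ≥0∞ := fun x => ENNReal.ofReal ((1 + ‖x‖) ^ r')
  have hnc : Continuous fun x : Euc d => 1 + ‖x‖ := continuous_const.add continuous_norm
  have hFm : Measurable F := by
    refine ENNReal.measurable_ofReal.comp (Continuous.measurable ?_)
    exact (hnc.rpow_const fun x => Or.inl (hnorm x).ne').mul
      (hDc.rpow_const fun _ => Or.inr hdr.le)
  have hGm : Measurable G := by
    refine ENNReal.measurable_ofReal.comp (Continuous.measurable ?_)
    exact hnc.rpow_const fun x => Or.inl (hnorm x).ne'
  have hF : ∫⁻ x, F x ∂μ ≤ ENNReal.ofReal ((ν.real Set.univ + 1) / κ * η) := by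
    have h1 := lintegral_infDist_rpow_mul_measure_closedBall_le (μ := μ) (ν := ν) hr hc0.le
      (fun y => (mul_measureReal_closedBall_le_distortion_sub hr hr'.le hμ hΓ y).trans (hgain y))
    have h2 : ENNReal.ofReal κ * ∫⁻ x, F x ∂μ ≤ ENNReal.ofReal η * ν Set.univ := by
      rw [← lintegral_const_mul _ hFm]
      refine le_trans (lintegral_mono fun x => ?_) h1
      have hx := hD0 x
      have h3 := ofReal_le_withDensity_closedBall (q := q) (M := M) (ρ := D x / 5) (by linarith)
        (by linarith) x (by linarith [hDM x])
      refine le_trans (le_of_eq ?_) (mul_le_mul_right h3 _)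
      rw [← ENNReal.ofReal_mul hκ0.le, ← ENNReal.ofReal_mul (by positivity)]
      congr 1
      change κ * ((1 + ‖x‖) ^ (-q) * D x ^ (d + r)) =
        c * (4 / 5 * D x) ^ r * (((1 + M) * (1 + ‖x‖)) ^ (-q) * (D x / 5) ^ d * v)
      rw [mul_rpow (by norm_num) hx, mul_rpow (by linarith) (hnorm x).le,
        rpow_add_of_nonneg hx hd0 hr.le, rpow_natCast, hκ]
      ring
    rw [← ENNReal.mul_le_mul_iff_right (a := ENNReal.ofReal κ) (by simpa using hκ0)
      ENNReal.ofReal_ne_top]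
    refine h2.trans ?_
    rw [← ENNReal.ofReal_mul hκ0.le, ← ofReal_measureReal, ← ENNReal.ofReal_mul hη]
    refine ENNReal.ofReal_le_ofReal ?_
    have : κ * ((ν.real Set.univ + 1) / κ * η) = (ν.real Set.univ + 1) * η := by
      field_simp
    rw [this]
    nlinarith
  have hG : ∫⁻ x, G x ∂μ ≤ ENNReal.ofReal (2 ^ r' * 2) := by
    have h1 := integrable_one_add_norm_rpow hr'0.le hμ zero_le_one
    rw [← ofReal_integral_eq_lintegral_ofReal h1
      (.of_forall fun x => rpow_nonneg (hnorm x).le _)]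
    refine ENNReal.ofReal_le_ofReal ?_
    calc ∫ x, (1 + ‖x‖) ^ r' ∂μ ≤ ∫ x, 2 ^ r' * (1 + ‖x‖ ^ r') ∂μ := by
          refine integral_mono h1 (((integrable_const _).add hμ).const_mul _) fun x => ?_
          simpa using add_rpow_le_two_rpow_mul zero_le_one (norm_nonneg x) hr'0.le
      _ = 2 ^ r' * (1 + ∫ x, ‖x‖ ^ r' ∂μ) := by
          rw [integral_const_mul, integral_add (integrable_const _) hμ]
          simp
      _ ≤ 2 ^ r' * 2 := by gcongr; linarith
  have hFG : ∀ x, ENNReal.ofReal (D x ^ s) = F x ^ θ * G x ^ (1 - θ) := fun x => by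
    have hx := hD0 x
    have hx' := hnorm x
    simp only [F, G]
    rw [ENNReal.ofReal_rpow_of_nonneg (by positivity) hθ0.le,
      ENNReal.ofReal_rpow_of_nonneg (by positivity) (by linarith),
      ← ENNReal.ofReal_mul (by positivity), mul_rpow (by positivity) (by positivity),
      ← rpow_mul hx'.le, ← rpow_mul hx'.le, ← rpow_mul hx, mul_right_comm, ← rpow_add hx']
    have e1 : -q * θ + r' * (1 - θ) = 0 := by
      rw [hq, hθ]
      field_simp
      ring
    have e2 : (d + r) * θ = s := by
      rw [hθ]
      field_simp
    rw [e1, e2, rpow_zero, one_mul]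
  have hmain : ENNReal.ofReal (distortion μ s Γ) ≤ ENNReal.ofReal
      (((ν.real Set.univ + 1) / κ) ^ θ * (2 ^ r' * 2) ^ (1 - θ) * η ^ θ) := by
    rw [distortion, ofReal_integral_eq_lintegral_ofReal (integrable_infDist_rpow hs.le hsr' hμ Γ)
      (.of_forall fun x => rpow_nonneg infDist_nonneg _)]
    calc ∫⁻ x, ENNReal.ofReal (D x ^ s) ∂μ = ∫⁻ x, F x ^ θ * G x ^ (1 - θ) ∂μ := by
          simp only [hFG]
      _ ≤ (∫⁻ x, F x ∂μ) ^ θ * (∫⁻ x, G x ∂μ) ^ (1 - θ) :=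
          ENNReal.lintegral_mul_norm_pow_le hFm.aemeasurable hGm.aemeasurable hθ0.le
            (by linarith) (by ring)
      _ ≤ ENNReal.ofReal ((ν.real Set.univ + 1) / κ * η) ^ θ *
          ENNReal.ofReal (2 ^ r' * 2) ^ (1 - θ) :=
          mul_le_mul' (ENNReal.rpow_le_rpow hF hθ0.le) (ENNReal.rpow_le_rpow hG (by linarith))
      _ = _ := by
          rw [ENNReal.ofReal_rpow_of_nonneg (by positivity) hθ0.le,
            ENNReal.ofReal_rpow_of_nonneg (by positivity) (by linarith),
            ← ENNReal.ofReal_mul (by positivity), mul_rpow (by positivity) hη]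
          congr 1
          ring
  exact (ENNReal.ofReal_le_ofReal_iff (by positivity)).1 hmain

/-- `Γ` minimizes the L^r distortion of `μ` among the nonempty grids with at most `N` points. -/
structure IsOptimalGrid (μ : Measure (Euc d)) (r : ℝ) (N : ℕ) (Γ : Finset (Euc d)) : Prop where
  nonempty : Γ.Nonempty
  card_le : Γ.card ≤ N
  distortion_le : ∀ Δ : Finset (Euc d), Δ.Nonempty → Δ.card ≤ N →
    distortion μ r Γ ≤ distortion μ r Δ

lemma IsOptimalGrid.distortion_le_two {μ : Measure (Euc d)} [IsProbabilityMeasure μ] {r r' : ℝ}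
    (hr : 0 < r) (hr' : r ≤ r') (hμ : Integrable (fun x => ‖x‖ ^ r') μ)
    (hμ1 : ∫ x, ‖x‖ ^ r' ∂μ ≤ 1) {N : ℕ} (hN : 1 ≤ N) {Γ : Finset (Euc d)}
    (h : IsOptimalGrid μ r N Γ) : distortion μ r Γ ≤ 2 := by
  refine (h.distortion_le {0} (by simp) (by simpa using hN)).trans ?_
  have h1 : ∫ x, (1 + ‖x‖ ^ r') ∂μ ≤ 2 := by
    rw [integral_add (integrable_const _) hμ]
    simp only [integral_const, probReal_univ, smul_eq_mul, mul_one]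
    linarith
  refine le_trans (integral_mono (integrable_infDist_rpow hr.le hr' hμ _)
    ((integrable_const _).add hμ) fun x => ?_) h1
  simpa using rpow_le_one_add_rpow (norm_nonneg x) hr.le hr'

lemma IsOptimalGrid.infDist_zero_le {μ : Measure (Euc d)} [IsProbabilityMeasure μ] {r r' : ℝ}
    (hr : 0 < r) (hr' : r ≤ r') (hμ : Integrable (fun x => ‖x‖ ^ r') μ)
    (hμ1 : ∫ x, ‖x‖ ^ r' ∂μ ≤ 1) {N : ℕ} (hN : 1 ≤ N) {Γ : Finset (Euc d)}
    (h : IsOptimalGrid μ r N Γ) :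
    infDist 0 (Γ : Set (Euc d)) ≤ 1 + (2 ^ r * 4) ^ (1 / r) := by
  have h2 := h.distortion_le_two hr hr' hμ hμ1 hN
  have hI := integrable_infDist_rpow hr.le hr' hμ Γ
  have h3 : infDist 0 (Γ : Set (Euc d)) ^ r ≤ 2 ^ r * 4 := by
    calc infDist 0 (Γ : Set (Euc d)) ^ r = ∫ _, infDist 0 (Γ : Set (Euc d)) ^ r ∂μ := by simp
      _ ≤ ∫ x, 2 ^ r * ((1 + ‖x‖ ^ r') + infDist x (Γ : Set (Euc d)) ^ r) ∂μ := by
          refine integral_mono (integrable_const _)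
            ((((integrable_const _).add hμ).add hI).const_mul _) fun x => ?_
          have h4 := infDist_le_infDist_add_dist (s := (Γ : Set (Euc d))) (x := 0) (y := x)
          rw [dist_zero_left, add_comm] at h4
          refine (rpow_le_rpow infDist_nonneg h4 hr.le).trans ?_
          refine (add_rpow_le_two_rpow_mul (norm_nonneg x) infDist_nonneg hr.le).trans ?_
          have := rpow_le_one_add_rpow (norm_nonneg x) hr.le hr'
          gcongr
      _ = 2 ^ r * ((1 + ∫ x, ‖x‖ ^ r' ∂μ) + distortion μ r Γ) := by
          have h5 : Integrable (fun x : Euc d => 1 + ‖x‖ ^ r') μ := (integrable_const _).add hμ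
          rw [integral_const_mul, integral_add h5 hI, integral_add (integrable_const _) hμ,
            distortion]
          simp
      _ ≤ 2 ^ r * 4 := by
          gcongr
          linarith
  have h4 := rpow_le_rpow (rpow_nonneg infDist_nonneg _) h3 (one_div_nonneg.2 hr.le)
  rw [← rpow_mul infDist_nonneg, mul_one_div_cancel hr.ne', rpow_one] at h4
  linarith

/-- Decay of nonnegative sequences whose decrements dominate a power of the sequence. -/
lemma mul_rpow_le_of_rpow_le_mul_sub {a : ℕ → ℝ} {A C p : ℝ} (hp : 0 < p) (hC : 0 < C)
    (ha : ∀ n, 0 ≤ a n) (hA : a 1 ≤ A)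
    (h : ∀ n, 1 ≤ n → a n ^ (1 + p) ≤ C * (a n - a (n + 1))) (n : ℕ) (hn : 1 ≤ n) :
    (n : ℝ) * a n ^ p ≤ A ^ p + 2 * C / p := by
  have hanti : ∀ n, 1 ≤ n → a (n + 1) ≤ a n := fun n hn => by
    have h1 := (rpow_nonneg (ha n) (1 + p)).trans (h n hn)
    nlinarith
  have key : ∀ n, 1 ≤ n → 0 < a n → p / C * ((n : ℝ) - 1) ≤ a n ^ (-p) := by
    intro n hn
    induction n, hn using Nat.le_induction with
    | base => intro h1; simpa using rpow_nonneg h1.le _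
    | succ n hn ih =>
      intro hpos
      have hpos' : 0 < a n := hpos.trans_le (hanti n hn)
      have h1 := ih hpos'
      have h2 : 1 - a (n + 1) / a n ≤ - Real.log (a (n + 1) / a n) := by
        have := Real.log_le_sub_one_of_pos (div_pos hpos hpos')
        linarith
      have h3 : 1 + p * (1 - a (n + 1) / a n) ≤ (a (n + 1) / a n) ^ (-p) := by
        rw [rpow_def_of_pos (div_pos hpos hpos')]
        have := Real.add_one_le_exp (Real.log (a (n + 1) / a n) * -p)
        nlinarith
      rw [div_rpow hpos.le hpos'.le, le_div_iff₀ (rpow_pos_of_pos hpos' _)] at h3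
      have h4 : p / C ≤ p * (1 - a (n + 1) / a n) * a n ^ (-p) := by
        have h5 := h n hn
        rw [rpow_add hpos', rpow_one] at h5
        have h6 : a n ^ p ≤ C * (1 - a (n + 1) / a n) := by
          rw [one_sub_div hpos'.ne', ← mul_div_assoc, le_div_iff₀ hpos']
          linarith
        have h7 : a n ^ p * a n ^ (-p) = 1 := by
          rw [← rpow_add hpos']
          simp
        have h8 := mul_le_mul_of_nonneg_right h6 (rpow_nonneg hpos'.le (-p))
        rw [h7] at h8
        rw [div_le_iff₀ hC]
        nlinarith
      push_cast
      linarith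
  have hA0 : 0 ≤ A := (ha 1).trans hA
  have hAp := rpow_nonneg hA0 p
  have hCp : 0 ≤ 2 * C / p := by positivity
  rcases (ha n).eq_or_lt with h0 | h0
  · rw [← h0, zero_rpow hp.ne']
    linarith
  rcases hn.eq_or_lt with rfl | hn1
  · have := rpow_le_rpow (ha 1) hA hp.le
    simp only [Nat.cast_one, one_mul]
    linarith
  · have h1 := key n hn h0
    rw [rpow_neg h0.le, ← one_div, le_div_iff₀ (rpow_pos_of_pos h0 _)] at h1
    have h2 : (2 : ℝ) ≤ n := by exact_mod_cast hn1
    have h3 := rpow_nonneg h0.le p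
    have h4 : ((n : ℝ) - 1) * a n ^ p ≤ C / p := by
      rw [le_div_iff₀ hp]
      have : p / C * ((n : ℝ) - 1) * a n ^ p = p * (((n : ℝ) - 1) * a n ^ p) / C := by ring
      rw [this, div_le_iff₀ hC] at h1
      linarith
    have h5 : 2 * C / p = 2 * (C / p) := by ring
    nlinarith

/-- Non-asymptotic L^r error bound for optimal grids (Pierce's lemma). -/
lemma exists_distortion_le_mul_rpow_neg (d : ℕ) (hd : 1 ≤ d) {r r' : ℝ} (hr : 0 < r)
    (hr' : r < r') :
    ∃ C : ℝ, 0 < C ∧ ∀ μ : Measure (Euc d), IsProbabilityMeasure μ →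
      Integrable (fun x => ‖x‖ ^ r') μ → ∫ x, ‖x‖ ^ r' ∂μ ≤ 1 →
      ∀ Γ : ℕ → Finset (Euc d), (∀ N, 1 ≤ N → IsOptimalGrid μ r N (Γ N)) →
      ∀ N : ℕ, 1 ≤ N → distortion μ r (Γ N) ≤ C * (N : ℝ) ^ (-(r / d)) := by
  have hd0 : (0 : ℝ) < d := by exact_mod_cast hd
  have hdr : 0 < d + r := by linarith
  have hM : 1 ≤ 1 + ((2 : ℝ) ^ r * 4) ^ (1 / r) := by
    have : 0 ≤ ((2 : ℝ) ^ r * 4) ^ (1 / r) := by positivity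
    linarith
  obtain ⟨C, hC, H⟩ := exists_distortion_le_mul_rpow d hr hr' hr
    ((lt_div_iff₀ (by linarith)).2 (by nlinarith)) hM
  set p : ℝ := d / r with hp
  have hp0 : 0 < p := by positivity
  set C' : ℝ := C ^ (1 + p) with hC'
  have hC'0 : 0 < C' := by positivity
  refine ⟨((2 : ℝ) ^ p + 2 * C' / p) ^ (r / d), by positivity, ?_⟩
  intro μ _ hμ hμ1 Γ hΓ N hN
  have hmono : ∀ n, 1 ≤ n → distortion μ r (Γ (n + 1)) ≤ distortion μ r (Γ n) := fun n hn =>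
    (hΓ (n + 1) (by lia)).distortion_le _ (hΓ n hn).nonempty ((hΓ n hn).card_le.trans (by lia))
  have hstep : ∀ n, 1 ≤ n → distortion μ r (Γ n) ^ (1 + p) ≤
      C' * (distortion μ r (Γ n) - distortion μ r (Γ (n + 1))) := by
    intro n hn
    have hη : 0 ≤ distortion μ r (Γ n) - distortion μ r (Γ (n + 1)) := sub_nonneg.2 (hmono n hn)
    have h1 := H μ inferInstance hμ hμ1 (Γ n) (hΓ n hn).nonempty
      ((hΓ n hn).infDist_zero_le hr hr'.le hμ hμ1 hn) _ hη (fun y => sub_le_sub_left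
        ((hΓ (n + 1) (by lia)).distortion_le _ (by simp)
          ((Finset.card_insert_le _ _).trans (by have := (hΓ n hn).card_le; lia))) _)
    have h2 := rpow_le_rpow (distortion_nonneg _ _ _) h1 (by linarith : 0 ≤ 1 + p)
    have e : r / (d + r) * (1 + p) = 1 := by
      rw [hp]
      field_simp
      ring
    rwa [mul_rpow hC.le (rpow_nonneg hη _), ← rpow_mul hη, e, rpow_one] at h2
  have h1 := mul_rpow_le_of_rpow_le_mul_sub hp0 hC'0 (fun n => distortion_nonneg μ r (Γ n))
    ((hΓ 1 le_rfl).distortion_le_two hr hr'.le hμ hμ1 le_rfl) hstep N hN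
  have hN0 : (0 : ℝ) < N := by exact_mod_cast hN
  have h2 := rpow_le_rpow (mul_nonneg hN0.le (rpow_nonneg (distortion_nonneg _ _ _) _)) h1
    (by positivity : 0 ≤ r / d)
  have e : p * (r / d) = 1 := by
    rw [hp]
    field_simp
  rw [mul_rpow hN0.le (rpow_nonneg (distortion_nonneg _ _ _) _),
    ← rpow_mul (distortion_nonneg _ _ _), e, rpow_one] at h2
  rw [rpow_neg hN0.le, ← div_eq_mul_inv, le_div_iff₀ (by positivity)]
  linarith

/-- A grid `Δ` can be replaced by a subset of `Γ` with at most `card Δ` points whose distance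
function is controlled by those of `Δ` and `Γ`. -/
lemma exists_subset_infDist_le {Γ Δ : Finset (Euc d)} (hΓ : Γ.Nonempty) (hΔ : Δ.Nonempty) :
    ∃ Γ' ⊆ Γ, Γ'.Nonempty ∧ Γ'.card ≤ Δ.card ∧ ∀ x, infDist x (Γ' : Set (Euc d)) ≤
      2 * infDist x (Δ : Set (Euc d)) + infDist x (Γ : Set (Euc d)) := by
  choose near hnear hneard using fun x : Euc d =>
    Γ.finite_toSet.isCompact.exists_infDist_eq_dist (by simpa using hΓ) x
  refine ⟨Δ.image near, ?_, hΔ.image near, Finset.card_image_le, fun x => ?_⟩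
  · intro z hz
    obtain ⟨g, -, rfl⟩ := Finset.mem_image.1 hz
    exact hnear g
  · obtain ⟨g, hg, hgx⟩ :=
      Δ.finite_toSet.isCompact.exists_infDist_eq_dist (by simpa using hΔ) x
    have h1 : infDist x ((Δ.image near : Finset (Euc d)) : Set (Euc d)) ≤ dist x (near g) :=
      infDist_le_dist_of_mem (Finset.mem_coe.2 (Finset.mem_image_of_mem near hg))
    have h2 := dist_triangle x g (near g)
    have h3 := hneard g
    have h4 := infDist_le_infDist_add_dist (s := (Γ : Set (Euc d))) (x := g) (y := x)
    rw [dist_comm g x] at h4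
    linarith

/-- Adding a point to an optimal grid of level `N` improves the distortion by at most the order
of the distortion of a grid of level `N / 2`, divided by `N`. -/
lemma IsOptimalGrid.mul_distortion_sub_insert_le {μ : Measure (Euc d)} [IsProbabilityMeasure μ]
    {r r' : ℝ} (hr : 0 < r) (hr' : r ≤ r') (hμ : Integrable (fun x => ‖x‖ ^ r') μ) {N : ℕ}
    {Γ Δ : Finset (Euc d)} (h : IsOptimalGrid μ r N Γ) (hΔ : Δ.Nonempty)
    (hΔN : 2 * Δ.card ≤ N) (y : Euc d) :
    (N : ℝ) * (distortion μ r Γ - distortion μ r (insert y Γ)) ≤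
      4 * 3 ^ r * distortion μ r Δ := by
  have hI : ∀ Γ : Finset (Euc d), Integrable (fun x => infDist x (Γ : Set (Euc d)) ^ r) μ :=
    integrable_infDist_rpow hr.le hr' hμ
  have hΔ0 := distortion_nonneg μ r Δ
  have hc := Finset.card_pos.2 hΔ
  have hN0 : (0 : ℝ) < N := by
    have : 0 < N := by lia
    exact_mod_cast this
  have h3 : (0 : ℝ) < 3 ^ r := by positivity
  rcases h.card_le.lt_or_eq with hlt | hcard
  · have := h.distortion_le (insert y Γ) (by simp) ((Finset.card_insert_le _ _).trans hlt)
    have h1 : (N : ℝ) * (distortion μ r Γ - distortion μ r (insert y Γ)) ≤ 0 :=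
      mul_nonpos_of_nonneg_of_nonpos hN0.le (by linarith)
    refine h1.trans (by positivity)
  obtain ⟨Γ', hsub, hne, hcard', hd'⟩ := exists_subset_infDist_le h.nonempty hΔ
  have hΓ' : distortion μ r Γ' ≤ 2 * 3 ^ r * distortion μ r Δ := by
    have h1 : distortion μ r Γ' ≤ 3 ^ r * (distortion μ r Δ + distortion μ r Γ) := by
      rw [distortion, distortion, distortion, ← integral_add (hI Δ) (hI Γ), ← integral_const_mul]
      refine integral_mono (hI Γ') (((hI Δ).add (hI Γ)).const_mul _) fun x => ?_
      have ha := rpow_nonneg (infDist_nonneg (x := x) (s := (Δ : Set (Euc d)))) r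
      have hb := rpow_nonneg (infDist_nonneg (x := x) (s := (Γ : Set (Euc d)))) r
      dsimp only
      rcases le_total (infDist x (Δ : Set (Euc d))) (infDist x (Γ : Set (Euc d))) with hle | hle
      · refine (rpow_le_rpow infDist_nonneg
          (by linarith [hd' x] : _ ≤ 3 * infDist x (Γ : Set (Euc d))) hr.le).trans ?_
        rw [mul_rpow (by norm_num) infDist_nonneg]
        nlinarith
      · refine (rpow_le_rpow infDist_nonneg
          (by linarith [hd' x] : _ ≤ 3 * infDist x (Δ : Set (Euc d))) hr.le).trans ?_
        rw [mul_rpow (by norm_num) infDist_nonneg]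
        nlinarith
    have h2 := h.distortion_le Δ hΔ (by lia)
    nlinarith
  set A := Γ \ Γ' with hA
  have hAcard : (N : ℝ) ≤ 2 * (A.card : ℝ) := by
    have h1 : A.card + Γ'.card = Γ.card := Finset.card_sdiff_add_card_eq_card hsub
    have : N ≤ 2 * A.card := by omega
    exact_mod_cast this
  have hsum : (A.card : ℝ) * distortion μ r Γ ≤
      A.card * distortion μ r (insert y Γ) + distortion μ r Γ' := by
    calc (A.card : ℝ) * distortion μ r Γ = ∑ _a ∈ A, distortion μ r Γ := by simp
      _ ≤ ∑ a ∈ A, distortion μ r (insert y (Γ.erase a)) := by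
          refine Finset.sum_le_sum fun a ha => h.distortion_le _ (by simp) ?_
          have h1 := Finset.card_erase_add_one (Finset.mem_sdiff.1 ha).1
          exact (Finset.card_insert_le _ _).trans (by omega)
      _ = ∫ x, ∑ a ∈ A, infDist x ((insert y (Γ.erase a) : Finset _) : Set (Euc d)) ^ r ∂μ :=
          (integral_finsetSum _ fun a _ => hI _).symm
      _ ≤ ∫ x, ((A.card : ℝ) * infDist x ((insert y Γ : Finset _) : Set (Euc d)) ^ r +
            infDist x (Γ' : Set (Euc d)) ^ r) ∂μ := by
          refine integral_mono (integrable_finsetSum _ fun a _ => hI _)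
            (((hI _).const_mul _).add (hI _)) fun x => ?_
          obtain ⟨b, hb, hbx⟩ := (insert y Γ).finite_toSet.isCompact.exists_infDist_eq_dist
            (by simp) x
          have hb' : b ∈ insert y Γ := hb
          have h0 : 0 ≤ infDist x (Γ' : Set (Euc d)) ^ r := rpow_nonneg infDist_nonneg _
          have hterm : ∀ a ∈ A, infDist x ((insert y (Γ.erase a) : Finset _) : Set (Euc d)) ^ r ≤
              infDist x ((insert y Γ : Finset _) : Set (Euc d)) ^ r +
                if a = b then infDist x (Γ' : Set (Euc d)) ^ r else 0 := by
            intro a ha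
            have h1 : 0 ≤ infDist x ((insert y Γ : Finset _) : Set (Euc d)) ^ r :=
              rpow_nonneg infDist_nonneg _
            split_ifs with hab
            · have h2 : infDist x ((insert y (Γ.erase a) : Finset _) : Set (Euc d)) ≤
                  infDist x (Γ' : Set (Euc d)) := by
                refine infDist_le_infDist_of_subset (Finset.coe_subset.2 fun z hz => ?_)
                  (by simpa using hne)
                refine Finset.mem_insert_of_mem (Finset.mem_erase.2 ⟨?_, hsub hz⟩)
                rintro rfl
                exact (Finset.mem_sdiff.1 ha).2 hz
              have := rpow_le_rpow infDist_nonneg h2 hr.le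
              linarith
            · rw [add_zero]
              refine rpow_le_rpow infDist_nonneg ?_ hr.le
              rw [hbx]
              refine infDist_le_dist_of_mem (Finset.mem_coe.2 ?_)
              rcases Finset.mem_insert.1 hb' with rfl | hbΓ
              · exact Finset.mem_insert_self _ _
              · exact Finset.mem_insert_of_mem (Finset.mem_erase.2 ⟨Ne.symm hab, hbΓ⟩)
          refine (Finset.sum_le_sum hterm).trans ?_
          rw [Finset.sum_add_distrib, Finset.sum_const, nsmul_eq_mul, Finset.sum_ite_eq']
          refine add_le_add le_rfl ?_
          split_ifs
          · exact le_rfl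
          · exact h0
      _ = _ := by
          rw [integral_add ((hI _).const_mul _) (hI _), integral_const_mul]
          rfl
  have hmono : 0 ≤ distortion μ r Γ - distortion μ r (insert y Γ) := by
    refine sub_nonneg.2 (integral_mono (hI _) (hI _) fun x => ?_)
    refine rpow_le_rpow infDist_nonneg (infDist_le_infDist_of_subset (by simp) ?_) hr.le
    simpa using h.nonempty
  nlinarith

/-- Distortion mismatch for normalized distributions. -/
lemma exists_distortion_le_mul_rpow_neg_of_lt (d : ℕ) (hd : 1 ≤ d) {r r' s : ℝ} (hr : 0 < r)
    (hr' : r < r') (hs : 0 < s) (hs' : s < (d + r) * r' / (d + r')) :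
    ∃ K : ℝ, 0 < K ∧ ∀ μ : Measure (Euc d), IsProbabilityMeasure μ →
      Integrable (fun x => ‖x‖ ^ r') μ → ∫ x, ‖x‖ ^ r' ∂μ ≤ 1 →
      ∀ Γ : ℕ → Finset (Euc d), (∀ N, 1 ≤ N → IsOptimalGrid μ r N (Γ N)) →
      ∀ N : ℕ, 1 ≤ N → distortion μ s (Γ N) ≤ K * (N : ℝ) ^ (-(s / d)) := by
  have hd0 : (0 : ℝ) < d := by exact_mod_cast hd
  have hdr : 0 < d + r := by linarith
  have hr'0 : 0 < r' := hr.trans hr'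
  have hdr' : 0 < d + r' := by linarith
  have hsr' : s ≤ r' := by
    have h1 : s * (d + r') < (d + r) * r' := (lt_div_iff₀ hdr').1 hs'
    have : s * (d + r') ≤ r' * (d + r') := by nlinarith
    exact le_of_mul_le_mul_right this hdr'
  set M : ℝ := 1 + (2 ^ r * 4) ^ (1 / r) with hMdef
  have hM : 1 ≤ M := by
    have : 0 ≤ ((2 : ℝ) ^ r * 4) ^ (1 / r) := by positivity
    linarith
  obtain ⟨C, hC, H⟩ := exists_distortion_le_mul_rpow d hr hr' hs hs' hM
  obtain ⟨C₁, hC₁, H₁⟩ := exists_distortion_le_mul_rpow_neg d hd hr hr'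
  set B : ℝ := 1 + 2 ^ r' * (M ^ r' + 1) with hB
  have hB0 : 0 < B := by positivity
  set E : ℝ := 4 * 3 ^ r * (C₁ * 3 ^ (r / d)) with hE
  have hE0 : 0 < E := by positivity
  refine ⟨B + C * E ^ (s / (d + r)), by positivity, ?_⟩
  intro μ _ hμ hμ1 Γ hΓ N hN
  have hΓM : infDist 0 (Γ N : Set (Euc d)) ≤ M :=
    (hΓ N hN).infDist_zero_le hr hr'.le hμ hμ1 hN
  have hN0 : (0 : ℝ) < N := by exact_mod_cast hN
  rcases hN.eq_or_lt with rfl | hN2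
  · have h1 : distortion μ s (Γ 1) ≤ B := by
      calc distortion μ s (Γ 1) ≤ ∫ x, (1 + 2 ^ r' * (M ^ r' + ‖x‖ ^ r')) ∂μ := by
            refine integral_mono (integrable_infDist_rpow hs.le hsr' hμ _) ((integrable_const _).add
              (((integrable_const _).add hμ).const_mul _)) fun x => ?_
            refine (rpow_le_one_add_rpow infDist_nonneg hs.le hsr').trans ?_
            refine add_le_add le_rfl (le_trans (rpow_le_rpow infDist_nonneg ?_ hr'0.le)
              (add_rpow_le_two_rpow_mul (by linarith) (norm_nonneg x) hr'0.le))
            exact (infDist_le_infDist_zero_add_norm _ x).trans (by linarith)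
        _ = 1 + 2 ^ r' * (M ^ r' + ∫ x, ‖x‖ ^ r' ∂μ) := by
            have h2 : Integrable (fun x : Euc d => M ^ r' + ‖x‖ ^ r') μ :=
              (integrable_const _).add hμ
            rw [integral_add (integrable_const _) (h2.const_mul _), integral_const_mul,
              integral_add (integrable_const _) hμ]
            simp
        _ ≤ B := by
            rw [hB]
            gcongr
    have h2 : 0 < C * E ^ (s / (d + r)) := by positivity
    simp only [Nat.cast_one, one_rpow, mul_one]
    linarith
  · have hn : 1 ≤ N / 2 := by lia
    have hn0 : (0 : ℝ) < (N / 2 : ℕ) := by exact_mod_cast hn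
    have h3n : (N : ℝ) / 3 ≤ (N / 2 : ℕ) := by
      rw [div_le_iff₀ (by norm_num)]
      have : N ≤ N / 2 * 3 := by lia
      exact_mod_cast this
    have hP : distortion μ r (Γ (N / 2)) ≤ C₁ * 3 ^ (r / d) * (N : ℝ) ^ (-(r / d)) := by
      refine (H₁ μ inferInstance hμ hμ1 Γ hΓ _ hn).trans ?_
      rw [mul_assoc]
      refine mul_le_mul_of_nonneg_left ?_ hC₁.le
      refine (rpow_le_rpow_of_nonpos (by positivity) h3n
        (by simpa using (by positivity : 0 ≤ r / d))).trans (le_of_eq ?_)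
      rw [div_rpow hN0.le (by norm_num), rpow_neg (by norm_num : (0 : ℝ) ≤ 3), div_inv_eq_mul,
        mul_comm]
    have hη : ∀ y, distortion μ r (Γ N) - distortion μ r (insert y (Γ N)) ≤
        E * (N : ℝ) ^ (-((d + r) / d)) := by
      intro y
      have h1 := (hΓ N hN).mul_distortion_sub_insert_le hr hr'.le hμ (hΓ _ hn).nonempty
        (by have := (hΓ _ hn).card_le; lia) y
      have e : (N : ℝ) ^ (-((d + r) / d)) = (N : ℝ) ^ (-(r / d)) / N := by
        have : -((d + r) / d) = -(r / d) - 1 := by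
          field_simp
          ring
        rw [this, rpow_sub hN0, rpow_one]
      rw [e, ← mul_div_assoc, le_div_iff₀ hN0, mul_comm]
      refine h1.trans ?_
      rw [hE, mul_assoc (4 * 3 ^ r)]
      gcongr
    have h1 := H μ inferInstance hμ hμ1 (Γ N) (hΓ N hN).nonempty hΓM _ (by positivity) hη
    rw [mul_rpow hE0.le (by positivity), ← rpow_mul hN0.le] at h1
    have e : -((d + r) / d) * (s / (d + r)) = -(s / d) := by
      field_simp
    rw [e, ← mul_assoc] at h1
    refine h1.trans ?_
    gcongr
    linarith

open scoped Pointwise in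
lemma infDist_smul_sub_image {τ : ℝ} (hτ : 0 < τ) (a x : Euc d) (S : Set (Euc d)) :
    infDist (τ⁻¹ • (x - a)) ((fun y => τ⁻¹ • (y - a)) '' S) = τ⁻¹ * infDist x S := by
  have h1 : (fun y => τ⁻¹ • (y - a)) '' S = τ⁻¹ • ((fun y => y - a) '' S) := by
    rw [← Set.image_smul, Set.image_image]
  have h2 : Isometry fun y : Euc d => y - a := Isometry.of_dist_eq fun x y => by simp
  rw [h1, infDist_smul₀ (inv_ne_zero hτ.ne'), infDist_image h2, norm_of_nonneg (by positivity)]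

lemma distortion_map_image {Ω : Type*} [MeasurableSpace Ω] {P : Measure Ω} {X : Ω → Euc d}
    (hX : Measurable X) {τ p : ℝ} (hτ : 0 < τ) (hp : 0 ≤ p) (a : Euc d) (Δ : Finset (Euc d)) :
    distortion (P.map fun ω => τ⁻¹ • (X ω - a)) p (Δ.image fun y => τ⁻¹ • (y - a)) =
      (τ ^ p)⁻¹ * ∫ ω, infDist (X ω) (Δ : Set (Euc d)) ^ p ∂P := by
  have hφ : Measurable fun ω => τ⁻¹ • (X ω - a) := by fun_prop
  rw [distortion, integral_map hφ.aemeasurable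
    (continuous_infDist_rpow _ hp).aestronglyMeasurable, ← integral_const_mul]
  congr with ω
  rw [Finset.coe_image, infDist_smul_sub_image hτ,
    mul_rpow (by positivity) infDist_nonneg, inv_rpow hτ.le]

lemma integral_infDist_rpow_le_of_quantErrRV_eq {Ω : Type*} [MeasurableSpace Ω] {P : Measure Ω}
    {X : Ω → Euc d} {r : ℝ} (hr : 0 < r) {N : ℕ} {Γ Δ : Finset (Euc d)}
    (h : quantErrRV r P X Γ = optQuantErrRV r N P X) (hΔ : Δ.Nonempty) (hΔN : Δ.card ≤ N) :
    ∫ ω, infDist (X ω) (Γ : Set (Euc d)) ^ r ∂P ≤ ∫ ω, infDist (X ω) (Δ : Set (Euc d)) ^ r ∂P := by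
  have hnn : ∀ Δ : Finset (Euc d), 0 ≤ ∫ ω, infDist (X ω) (Δ : Set (Euc d)) ^ r ∂P :=
    fun Δ => integral_nonneg fun _ => rpow_nonneg infDist_nonneg _
  have h1 : quantErrRV r P X Γ ≤ quantErrRV r P X Δ := by
    rw [h]
    refine csInf_le ⟨0, ?_⟩ ⟨Δ, hΔ, hΔN, rfl⟩
    rintro _ ⟨Δ, -, -, rfl⟩
    exact rpow_nonneg (hnn Δ) _
  exact (rpow_le_rpow_iff (hnn Γ) (hnn Δ) (one_div_pos.2 hr)).1 h1

lemma integral_norm_sub_rpow_pos (hd : 1 ≤ d) {Ω : Type*} [MeasurableSpace Ω] {P : Measure Ω}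
    {X : Ω → Euc d} (hX : Measurable X)
    (hsing : ¬ (P.map X).MutuallySingular (volume : Measure (Euc d))) {p : ℝ} (hp : 0 < p)
    (a : Euc d) (hXint : Integrable (fun ω => ‖X ω - a‖ ^ p) P) :
    0 < ∫ ω, ‖X ω - a‖ ^ p ∂P := by
  refine (integral_nonneg fun ω => rpow_nonneg (norm_nonneg _) _).lt_of_ne' fun h0 => hsing ?_
  have : Nonempty (Fin d) := ⟨⟨0, hd⟩⟩
  rw [integral_eq_zero_iff_of_nonneg (fun ω => rpow_nonneg (norm_nonneg _) _) hXint] at h0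
  have h1 : ∀ᵐ ω ∂P, X ω = a := by
    filter_upwards [h0] with ω hω
    have h2 := (rpow_eq_zero (norm_nonneg _) hp.ne').1 hω
    exact sub_eq_zero.1 (norm_eq_zero.1 h2)
  refine Measure.MutuallySingular.mk (s := {a}ᶜ) (t := {a}) ?_ (measure_singleton a)
    (Set.compl_union_self {a}).ge
  rw [Measure.map_apply hX (measurableSet_singleton a).compl]
  exact h1

end Distortion

/-- **Distortion mismatch.** Let `r > 0` and `X` an ℝ^d-valued random vector with
`E|X|^{r'} < ∞` for some `r' > r`, whose law has a non-zero absolutely continuous component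
w.r.t. Lebesgue measure (i.e. is not mutually singular with it).  Let `(Γ_N)` be a sequence of
`L^r`-optimal quantizers of `X`.  Then for every `s ∈ (0, (d+r)r'/(d+r'))` there is a finite
constant `K̃_{d,r,r',s}` (depending only on `d, r, r', s`) with
`e_s(Γ_N, X) ≤ K̃ · σ_{r'}(X) · N^{−1/d}` for all `N ≥ 1`. -/
theorem distortion_mismatch (d : ℕ) (hd : 1 ≤ d) (r r' s : ℝ) (hr : 0 < r) (hr' : r < r')
    (hs : 0 < s) (hs' : s < (d + r) * r' / (d + r')) :
    ∃ K : ℝ, ∀ (Ω : Type) (_ : MeasurableSpace Ω) (P : Measure Ω), IsProbabilityMeasure P →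
      ∀ X : Ω → Euc d, Measurable X →
        Integrable (fun ω => ‖X ω‖ ^ r') P →
        ¬ (P.map X).MutuallySingular (volume : Measure (Euc d)) →
        ∀ Γ : ℕ → Finset (Euc d),
          (∀ N : ℕ, 1 ≤ N → (Γ N).Nonempty ∧ (Γ N).card ≤ N ∧
            quantErrRV r P X (Γ N) = optQuantErrRV r N P X) →
          ∀ N : ℕ, 1 ≤ N →
            quantErrRV s P X (Γ N) ≤ K * sigmaRV r' P X * (N : ℝ) ^ (-(1 / (d : ℝ))) := by
  obtain ⟨K, hK, H⟩ := exists_distortion_le_mul_rpow_neg_of_lt d hd hr hr' hs hs'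
  refine ⟨K ^ (1 / s), ?_⟩
  intro Ω _ P _ X hX hXint hsing Γ hΓ N hN
  have hr'0 : 0 < r' := hr.trans hr'
  have hN0 : (0 : ℝ) < N := by exact_mod_cast hN
  have hpos : 0 < K ^ (1 / s) * (N : ℝ) ^ (-(1 / (d : ℝ))) := by positivity
  rw [mul_right_comm, ← div_le_iff₀' hpos]
  refine le_ciInf fun a => ?_
  rw [div_le_iff₀' hpos]
  have hinta : Integrable (fun ω => ‖X ω - a‖ ^ r') P := by
    refine ((hXint.add (integrable_const (‖a‖ ^ r'))).const_mul (2 ^ r')).mono'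
      ((hX.sub_const a).norm.pow_const r').aestronglyMeasurable (.of_forall fun ω => ?_)
    rw [norm_of_nonneg (by positivity)]
    exact (rpow_le_rpow (norm_nonneg _) (norm_sub_le _ _) hr'0.le).trans
      (add_rpow_le_two_rpow_mul (norm_nonneg _) (norm_nonneg _) hr'0.le)
  have hI := integral_norm_sub_rpow_pos hd hX hsing hr'0 a hinta
  set I := ∫ ω, ‖X ω - a‖ ^ r' ∂P with hIdef
  set τ := I ^ (1 / r') with hτdef
  have hτ : 0 < τ := by positivity
  have hτI : τ ^ r' = I := by
    rw [hτdef, ← rpow_mul hI.le, one_div_mul_cancel hr'0.ne', rpow_one]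
  have hφ : Measurable fun ω => τ⁻¹ • (X ω - a) := by fun_prop
  set μ := P.map fun ω => τ⁻¹ • (X ω - a) with hμ
  have hμP : IsProbabilityMeasure μ := Measure.isProbabilityMeasure_map hφ.aemeasurable
  have hnorm : ∀ ω, ‖τ⁻¹ • (X ω - a)‖ ^ r' = I⁻¹ * ‖X ω - a‖ ^ r' := fun ω => by
    rw [norm_smul, norm_of_nonneg (by positivity), mul_rpow (by positivity) (norm_nonneg _),
      inv_rpow hτ.le, hτI]
  have hnm : AEStronglyMeasurable (fun x : Euc d => ‖x‖ ^ r') μ :=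
    (continuous_norm.rpow_const fun _ => Or.inr hr'0.le).aestronglyMeasurable
  have hμint : Integrable (fun x => ‖x‖ ^ r') μ := by
    rw [integrable_map_measure hnm hφ.aemeasurable]
    simpa only [Function.comp_def, hnorm] using hinta.const_mul I⁻¹
  have hμ1 : ∫ x, ‖x‖ ^ r' ∂μ ≤ 1 := by
    rw [integral_map hφ.aemeasurable hnm]
    simp only [hnorm]
    rw [integral_const_mul, ← hIdef, inv_mul_cancel₀ hI.ne']
  have hopt : ∀ N, 1 ≤ N → IsOptimalGrid μ r N ((Γ N).image fun y => τ⁻¹ • (y - a)) := by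
    intro N hN
    obtain ⟨hne, hcard, heq⟩ := hΓ N hN
    refine ⟨hne.image _, Finset.card_image_le.trans hcard, fun Δ hΔ hΔN => ?_⟩
    have hΔ' : Δ = (Δ.image fun y => τ • y + a).image fun y => τ⁻¹ • (y - a) := by
      rw [Finset.image_image]
      simp [Function.comp_def, smul_smul, inv_mul_cancel₀ hτ.ne']
    rw [hΔ', distortion_map_image hX hτ hr.le, distortion_map_image hX hτ hr.le]
    exact mul_le_mul_of_nonneg_left (integral_infDist_rpow_le_of_quantErrRV_eq hr heq
      (hΔ.image _) (Finset.card_image_le.trans hΔN)) (by positivity)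
  have h1 := H μ hμP hμint hμ1 _ hopt N hN
  rw [distortion_map_image hX hτ hs.le, inv_mul_le_iff₀ (by positivity)] at h1
  have h2 := rpow_le_rpow (integral_nonneg fun ω => rpow_nonneg Metric.infDist_nonneg _) h1
    (one_div_nonneg.2 hs.le)
  refine h2.trans (le_of_eq ?_)
  have e : -(s / d) * (1 / s) = -(1 / (d : ℝ)) := by
    have : (d : ℝ) ≠ 0 := by positivity
    field_simp
  rw [mul_rpow (by positivity) (by positivity), mul_rpow hK.le (by positivity), ← rpow_mul hτ.le,
    mul_one_div_cancel hs.ne', rpow_one, ← rpow_mul hN0.le, e]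
  ring
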